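/- arXiv:2106.14242 — 2 statements merged into one kernel-verified Lean document; each statement's English description precedes it below -/
import Mathlib

section
/- Let a ∈ ℝ, ε > 0 and t ∈ ℝ with t ≠ 0. Then the limit lim_{R→∞} ∫_{−R}^{R} e^{i t ξ} / (ξ − (a + iε)) dξ exists; it equals 2πi · e^{i t (a + iε)} (that is, 2πi e^{ita} e^{−tε}) if t > 0, and it equals 0 if t < 0. -/
/-!
One integration by parts turns the conditionally convergent integral of `e^{itξ} / (ξ - p)`,
`p = a + iε`, into boundary terms of size `O(1/R)` plus `1/(it)` times the absolutely convergent
integral of `e^{itξ} / (ξ - p)²`. The latter is evaluated by Fourier inversion: the function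
`h(s) = s₊ e^{isp}` is continuous and integrable because `Im p > 0`, and its Fourier transform
`∫ h(s) e^{-isξ} ds = -1 / (ξ - p)²` is integrable as well, so that
`∫ e^{itξ} / (ξ - p)² dξ = -2π h(t)` for every real `t`. Dividing by `it` gives `2πi e^{itp}` for
`t > 0` and `0` for `t < 0`.
-/

open Filter intervalIntegral
open scoped Topology

noncomputable section

open MeasureTheory Set in
theorem integrableOn_mul_cexp_neg_mul {r : ℂ} (hr : 0 < r.re) :
    IntegrableOn (fun s : ℝ => (s : ℂ) * Complex.exp (-r * s)) (Ioi 0) := by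
  have h := integrableOn_rpow_mul_exp_neg_mul_rpow (p := 1) (s := 1) (by norm_num) one_pos hr
  refine Integrable.mono' h (by fun_prop) ?_
  refine (ae_restrict_iff' measurableSet_Ioi).2 (Eventually.of_forall fun s hs => ?_)
  have hs' : (0 : ℝ) < s := hs
  simp [Complex.norm_exp, abs_of_pos hs']

open MeasureTheory Set in
theorem integral_mul_cexp_neg_mul_Ioi {r : ℂ} (hr : 0 < r.re) :
    ∫ s in Ioi (0 : ℝ), (s : ℂ) * Complex.exp (-r * s) = 1 / r ^ 2 := by
  have hr0 : r ≠ 0 := by rintro rfl; simp at hr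
  have hderiv : ∀ s : ℝ, HasDerivAt
      (fun s : ℝ => -((s : ℂ) / r + 1 / r ^ 2) * Complex.exp (-r * s))
      ((s : ℂ) * Complex.exp (-r * s)) s := by
    intro s
    have h1 : HasDerivAt (fun s : ℝ => (s : ℂ)) 1 s := Complex.ofRealCLM.hasDerivAt
    convert! (((h1.div_const r).add_const (1 / r ^ 2)).neg.mul (h1.const_mul (-r)).cexp) using 1
    simp only [Pi.neg_apply]
    field_simp
    ring
  have hexp : Tendsto (fun s : ℝ => Complex.exp (-r * s)) atTop (𝓝 0) := by
    rw [tendsto_zero_iff_norm_tendsto_zero]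
    have := tendsto_rpow_mul_exp_neg_mul_atTop_nhds_zero 0 r.re hr
    simpa [Complex.norm_exp] using this
  have hmul : Tendsto (fun s : ℝ => (s : ℂ) * Complex.exp (-r * s)) atTop (𝓝 0) := by
    rw [tendsto_zero_iff_norm_tendsto_zero]
    have := (tendsto_rpow_mul_exp_neg_mul_atTop_nhds_zero 1 r.re hr).norm
    simpa [Complex.norm_exp] using this
  have hlim : Tendsto (fun s : ℝ => -((s : ℂ) / r + 1 / r ^ 2) * Complex.exp (-r * s))
      atTop (𝓝 0) := by
    have := ((hmul.const_mul (1 / r)).add (hexp.const_mul (1 / r ^ 2))).neg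
    simp only [mul_zero, add_zero, neg_zero] at this
    refine this.congr fun s => ?_
    ring
  rw [integral_Ioi_of_hasDerivAt_of_tendsto' (fun s _ => hderiv s)
    (integrableOn_mul_cexp_neg_mul hr) hlim]
  simp

theorem ofReal_sub_ne_zero {p : ℂ} (hp : 0 < p.im) (ξ : ℝ) : (ξ : ℂ) - p ≠ 0 := by
  intro h
  have := congrArg Complex.im h
  simp at this
  exact hp.ne' this

open MeasureTheory in
theorem integrable_inv_ofReal_sub_sq {p : ℂ} (hp : 0 < p.im) :
    Integrable (fun ξ : ℝ => 1 / ((ξ : ℂ) - p) ^ 2) := by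
  have h := ((integrable_inv_one_add_sq.comp_div hp.ne').comp_sub_right p.re).const_mul
    (p.im ^ 2)⁻¹
  refine h.mono' ?_ (Eventually.of_forall fun ξ => le_of_eq ?_)
  · refine (Continuous.div (by fun_prop) (by fun_prop) fun ξ => ?_).aestronglyMeasurable
    exact pow_ne_zero 2 (ofReal_sub_ne_zero hp ξ)
  · rw [norm_div, norm_pow, ← Complex.normSq_eq_norm_sq, Complex.normSq_apply]
    have : p.im ≠ 0 := hp.ne'
    simp only [norm_one, Complex.sub_re, Complex.sub_im, Complex.ofReal_re, Complex.ofReal_im,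
      one_div, ← mul_inv]
    congr 1
    field_simp
    ring

open MeasureTheory in
theorem integrable_cexp_div_sq {p : ℂ} (hp : 0 < p.im) (t : ℝ) :
    Integrable (fun ξ : ℝ => Complex.exp (Complex.I * t * ξ) / ((ξ : ℂ) - p) ^ 2) := by
  refine (integrable_inv_ofReal_sub_sq hp).mono ?_ (Eventually.of_forall fun ξ => le_of_eq ?_)
  · refine (Continuous.div (by fun_prop) (by fun_prop) fun ξ => ?_).aestronglyMeasurable
    exact pow_ne_zero 2 (ofReal_sub_ne_zero hp ξ)
  · simp [Complex.norm_exp]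

/-- The continuous function `s ↦ s₊ e^{isp}`, whose Fourier transform in the angular frequency `ξ`
is `-1 / (ξ - p)²` when `Im p > 0`. -/
def rampExp (p : ℂ) (s : ℝ) : ℂ := ((max s 0 : ℝ) : ℂ) * Complex.exp (Complex.I * s * p)

theorem rampExp_eq_indicator (p : ℂ) :
    rampExp p = (Set.Ioi (0 : ℝ)).indicator
      (fun s : ℝ => (s : ℂ) * Complex.exp (-(-Complex.I * p) * s)) := by
  ext s
  by_cases hs : 0 < s
  · rw [Set.indicator_of_mem (Set.mem_Ioi.2 hs), rampExp, max_eq_left hs.le]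
    congr 2
    ring
  · rw [Set.indicator_of_notMem (by simpa using hs), rampExp, max_eq_right (not_lt.1 hs)]
    simp

open FourierTransform in
theorem fourier_rampExp {p : ℂ} (hp : 0 < p.im) (w : ℝ) :
    𝓕 (rampExp p) w = -(1 / (((2 * Real.pi * w : ℝ) : ℂ) - p) ^ 2) := by
  have hr : 0 < (Complex.I * (((2 * Real.pi * w : ℝ) : ℂ) - p)).re := by
    simpa [Complex.mul_re] using hp
  have key := integral_mul_cexp_neg_mul_Ioi hr
  rw [← MeasureTheory.integral_indicator measurableSet_Ioi] at key
  rw [Real.fourier_real_eq_integral_exp_smul]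
  trans 1 / (Complex.I * (((2 * Real.pi * w : ℝ) : ℂ) - p)) ^ 2
  · rw [← key]
    congr 1
    ext s
    rw [rampExp_eq_indicator]
    by_cases hs : s ∈ Set.Ioi (0 : ℝ)
    · rw [Set.indicator_of_mem hs, Set.indicator_of_mem hs, smul_eq_mul, mul_left_comm,
        ← Complex.exp_add]
      congr 2
      push_cast
      ring
    · rw [Set.indicator_of_notMem hs, Set.indicator_of_notMem hs, smul_zero]
  · rw [mul_pow, Complex.I_sq, neg_one_mul, div_neg]

open FourierTransform MeasureTheory in
/-- Fourier inversion for `s ↦ s₊ e^{isp}`. -/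
theorem integral_cexp_div_sq {p : ℂ} (hp : 0 < p.im) (t : ℝ) :
    ∫ ξ : ℝ, Complex.exp (Complex.I * t * ξ) / ((ξ : ℂ) - p) ^ 2 =
      -(2 * Real.pi : ℝ) * rampExp p t := by
  have hcont : Continuous (rampExp p) := by unfold rampExp; fun_prop
  have hint : Integrable (rampExp p) := by
    rw [rampExp_eq_indicator, integrable_indicator_iff measurableSet_Ioi]
    exact integrableOn_mul_cexp_neg_mul (by simpa using hp)
  have hF : 𝓕 (rampExp p) = fun w : ℝ => -(1 / (((2 * Real.pi * w : ℝ) : ℂ) - p) ^ 2) :=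
    funext (fourier_rampExp hp)
  have hFint : Integrable (𝓕 (rampExp p)) := by
    rw [hF]
    exact ((integrable_inv_ofReal_sub_sq hp).comp_mul_left' Real.two_pi_pos.ne').neg
  have hinv := congrFun (hcont.fourierInv_fourier_eq hint hFint) t
  rw [Real.fourierInv_eq', hF] at hinv
  have hsub := Measure.integral_comp_mul_left
    (fun ξ : ℝ => Complex.exp (Complex.I * t * ξ) / ((ξ : ℂ) - p) ^ 2) (2 * Real.pi)
  have hneg : ∫ w : ℝ, Complex.exp (Complex.I * t * ((2 * Real.pi * w : ℝ) : ℂ)) /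
      (((2 * Real.pi * w : ℝ) : ℂ) - p) ^ 2 = -rampExp p t := by
    rw [← hinv, ← MeasureTheory.integral_neg]
    congr 1
    ext w
    rw [smul_eq_mul, mul_neg, neg_neg, mul_one_div]
    congr 2
    simp
    ring
  rw [hneg, abs_of_pos (inv_pos.2 Real.two_pi_pos), Complex.real_smul] at hsub
  have hpi : ((2 * Real.pi : ℝ) : ℂ) ≠ 0 := Complex.ofReal_ne_zero.2 Real.two_pi_pos.ne'
  rw [neg_mul, ← mul_neg, hsub, Complex.ofReal_inv, mul_inv_cancel_left₀ hpi]

theorem integral_cexp_div_by_parts {p : ℂ} (hp : 0 < p.im) {t : ℝ} (ht : t ≠ 0) (R : ℝ) :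
    ∫ ξ in (-R)..R, Complex.exp (Complex.I * t * ξ) / ((ξ : ℂ) - p) =
      1 / (Complex.I * t) *
        (Complex.exp (Complex.I * t * R) / ((R : ℂ) - p) -
          Complex.exp (Complex.I * t * (-R : ℝ)) / (((-R : ℝ) : ℂ) - p) +
          ∫ ξ in (-R)..R, Complex.exp (Complex.I * t * ξ) / ((ξ : ℂ) - p) ^ 2) := by
  have hIt : Complex.I * (t : ℂ) ≠ 0 :=
    mul_ne_zero Complex.I_ne_zero (Complex.ofReal_ne_zero.2 ht)
  have hc1 : Continuous fun ξ : ℝ => Complex.exp (Complex.I * t * ξ) / ((ξ : ℂ) - p) :=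
    Continuous.div (by fun_prop) (by fun_prop) (ofReal_sub_ne_zero hp)
  have hc2 : Continuous fun ξ : ℝ => Complex.exp (Complex.I * t * ξ) / ((ξ : ℂ) - p) ^ 2 :=
    Continuous.div (by fun_prop) (by fun_prop)
      fun ξ => pow_ne_zero 2 (ofReal_sub_ne_zero hp ξ)
  have hderiv : ∀ ξ : ℝ, HasDerivAt
      (fun ξ : ℝ => Complex.exp (Complex.I * t * ξ) / ((ξ : ℂ) - p))
      (Complex.I * t * (Complex.exp (Complex.I * t * ξ) / ((ξ : ℂ) - p)) -
        Complex.exp (Complex.I * t * ξ) / ((ξ : ℂ) - p) ^ 2) ξ := by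
    intro ξ
    have h0 := ofReal_sub_ne_zero hp ξ
    have h1 : HasDerivAt (fun s : ℝ => (s : ℂ)) 1 ξ := Complex.ofRealCLM.hasDerivAt
    convert! (h1.const_mul (Complex.I * t)).cexp.div (h1.sub_const p) h0 using 1
    field_simp
  have h := intervalIntegral.integral_eq_sub_of_hasDerivAt (a := -R) (b := R)
    (fun ξ _ => hderiv ξ) (((hc1.const_mul _).sub hc2).intervalIntegrable _ _)
  rw [intervalIntegral.integral_sub ((hc1.const_mul _).intervalIntegrable _ _)
    (hc2.intervalIntegrable _ _), intervalIntegral.integral_const_mul] at h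
  rw [← h, sub_add_cancel, one_div, inv_mul_cancel_left₀ hIt]

theorem tendsto_cexp_div_cobounded (p : ℂ) (t : ℝ) :
    Tendsto (fun ξ : ℝ => Complex.exp (Complex.I * t * ξ) / ((ξ : ℂ) - p))
      (Bornology.cobounded ℝ) (𝓝 0) := by
  have h1 : Tendsto (fun ξ : ℝ => (ξ : ℂ) - p) (Bornology.cobounded ℝ)
      (Bornology.cobounded ℂ) := by
    rw [← tendsto_norm_atTop_iff_cobounded]
    refine tendsto_atTop_mono (f := fun ξ : ℝ => ‖ξ‖ - ‖p‖) (fun ξ => ?_)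
      (tendsto_atTop_add_const_right _ _ tendsto_norm_cobounded_atTop)
    simpa using norm_sub_norm_le (ξ : ℂ) p
  have h2 := (tendsto_inv₀_cobounded.comp h1).norm
  rw [tendsto_zero_iff_norm_tendsto_zero]
  simpa [Complex.norm_exp, Function.comp_def] using h2

/-- The inverse Fourier transform of `ξ ↦ 1/(ξ - a - iε)`: the limit of the truncated
integrals exists and equals `2πi e^{it(a+iε)}` for `t > 0` and `0` for `t < 0`. -/
theorem inverse_fourier_of_shifted_pole (a ε t : ℝ) (hε : 0 < ε) (ht : t ≠ 0) :
    Tendsto (fun R : ℝ =>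
        ∫ ξ in (-R)..R,
          Complex.exp (Complex.I * (t : ℂ) * (ξ : ℂ)) /
            ((ξ : ℂ) - ((a : ℂ) + (ε : ℂ) * Complex.I)))
      atTop
      (𝓝 (if 0 < t then
          ((2 * Real.pi : ℝ) : ℂ) * Complex.I *
            Complex.exp (Complex.I * (t : ℂ) * ((a : ℂ) + (ε : ℂ) * Complex.I))
        else 0)) := by
  set p : ℂ := (a : ℂ) + (ε : ℂ) * Complex.I with hp_def
  have hp : 0 < p.im := by simpa [hp_def] using hε
  have hcob : Bornology.cobounded ℝ = atBot ⊔ atTop := IsOrderBornology.cobounded_eq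
  have hlim := tendsto_cexp_div_cobounded p t
  rw [hcob, tendsto_sup] at hlim
  have htop := hlim.2
  have hbot := hlim.1.comp tendsto_neg_atTop_atBot
  have hint := MeasureTheory.intervalIntegral_tendsto_integral (integrable_cexp_div_sq hp t)
    tendsto_neg_atTop_atBot tendsto_id
  have h := ((htop.sub hbot).add hint).const_mul (1 / (Complex.I * (t : ℂ)))
  simp only [integral_cexp_div_by_parts hp ht]
  convert! h using 2
  have ht' : (t : ℂ) ≠ 0 := Complex.ofReal_ne_zero.2 ht
  rw [integral_cexp_div_sq hp, rampExp]
  split_ifs with hpos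
  · rw [max_eq_left hpos.le]
    field_simp
    simp [Complex.I_sq]
  · rw [max_eq_right (not_lt.1 hpos)]
    simp
end
end

section
/- Let d ≥ 2 and m ≥ 1 be integers and let r > 0. Write points of ℝ^d as ξ = (ξ', ξ_d) with ξ' ∈ ℝ^{d−1}, set φ(ξ') = √(r² − |ξ'|²), and let U = {(ξ', ξ_d) : |ξ'| < r/2 and ξ_d > r/2}. Define F : U → ℝ by F(ξ) = (ξ_d − φ(ξ')) / (|ξ|^{2m} − r^{2m}) when |ξ| ≠ r, and F(ξ) = 1/(2m · r^{2m−2} · ξ_d) when |ξ| = r. Then F is infinitely differentiable (C^∞) on U. -/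
noncomputable section

/-!
Put `s = |ξ|²`, `R = r²` and `Σ = ∑_{i<m} sⁱ R^(m-1-i)`. Then
`s^m - R^m = (s - R) Σ = (ξ_d - φ) (ξ_d + φ) Σ`, because `φ² = R - |ξ'|²` on `U`. The vanishing
factor `ξ_d - φ` cancels, so off the sphere `F = 1 / ((ξ_d + φ) Σ)`. On the sphere `ξ_d = φ` and
`Σ = m r^(2m-2)`, so the prescribed value agrees with the same formula. The right-hand side is
smooth: on `U` both `ξ_d + φ` and `Σ` are positive, and `φ` is the square root of a positive
smooth function.
-/

/-- The removable-singularity quotient `(ξ_d - φ(ξ'))/(|ξ|^{2m} - r^{2m})`, extended across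
the sphere by `1/(2m r^{2m-2} ξ_d)`, is smooth on `U = {|ξ'| < r/2, ξ_d > r/2}`. -/
theorem removable_singularity_quotient_smooth (d m : ℕ) (hd : 2 ≤ d) (hm : 1 ≤ m)
    (r : ℝ) (hr : 0 < r)
    (φ : EuclideanSpace ℝ (Fin (d - 1)) → ℝ)
    (hφ : ∀ ξ', φ ξ' = Real.sqrt (r ^ 2 - ‖ξ'‖ ^ 2))
    (U : Set (EuclideanSpace ℝ (Fin (d - 1)) × ℝ))
    (hU : U = {ξ : EuclideanSpace ℝ (Fin (d - 1)) × ℝ | ‖ξ.1‖ < r / 2 ∧ r / 2 < ξ.2})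
    (F : EuclideanSpace ℝ (Fin (d - 1)) × ℝ → ℝ)
    (hF : ∀ ξ : EuclideanSpace ℝ (Fin (d - 1)) × ℝ,
      F ξ = if ‖ξ.1‖ ^ 2 + ξ.2 ^ 2 = r ^ 2 then
          1 / (2 * (m : ℝ) * r ^ (2 * m - 2) * ξ.2)
        else
          (ξ.2 - φ ξ.1) / ((‖ξ.1‖ ^ 2 + ξ.2 ^ 2) ^ m - r ^ (2 * m))) :
    ContDiffOn ℝ (⊤ : ℕ∞) F U := by
  subst hU
  set S : EuclideanSpace ℝ (Fin (d - 1)) × ℝ → ℝ := fun ξ =>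
    ∑ i ∈ Finset.range m, (‖ξ.1‖ ^ 2 + ξ.2 ^ 2) ^ i * (r ^ 2) ^ (m - 1 - i) with hS
  have hrad : ∀ ξ : EuclideanSpace ℝ (Fin (d - 1)) × ℝ, ‖ξ.1‖ < r / 2 →
      0 < r ^ 2 - ‖ξ.1‖ ^ 2 := fun ξ h => by
    nlinarith [norm_nonneg ξ.1]
  have hSpos : ∀ ξ : EuclideanSpace ℝ (Fin (d - 1)) × ℝ, r / 2 < ξ.2 → 0 < S ξ := fun ξ h => by
    have h2 : 0 < ξ.2 := by linarith
    exact Finset.sum_pos (fun i _ => by positivity) ⟨0, Finset.mem_range.2 (by omega)⟩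
  have hnorm : ContDiff ℝ (⊤ : ℕ∞)
      (fun ξ : EuclideanSpace ℝ (Fin (d - 1)) × ℝ => ‖ξ.1‖ ^ 2) :=
    contDiff_fst.norm_sq ℝ
  have hSsmooth : ContDiff ℝ (⊤ : ℕ∞) S :=
    ContDiff.sum fun i _ => ((hnorm.add (contDiff_snd.pow 2)).pow i).mul contDiff_const
  have hsmooth : ContDiffOn ℝ (⊤ : ℕ∞)
      (fun ξ : EuclideanSpace ℝ (Fin (d - 1)) × ℝ =>
        ((ξ.2 + Real.sqrt (r ^ 2 - ‖ξ.1‖ ^ 2)) * S ξ)⁻¹)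
      {ξ | ‖ξ.1‖ < r / 2 ∧ r / 2 < ξ.2} := by
    refine ContDiffOn.inv (ContDiffOn.mul (contDiff_snd.contDiffOn.add
      (ContDiffOn.sqrt (contDiff_const.sub hnorm).contDiffOn ?_)) hSsmooth.contDiffOn) ?_
    · exact fun ξ hξ => (hrad ξ hξ.1).ne'
    · intro ξ hξ
      have h2 : 0 < ξ.2 := by linarith [hξ.2]
      have := hSpos ξ hξ.2
      positivity
  refine hsmooth.congr fun ξ hξ => ?_
  have h2 : 0 < ξ.2 := by linarith [hξ.2]
  have hsp := hSpos ξ hξ.2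
  have hsq := Real.sq_sqrt (hrad ξ hξ.1).le
  have hnn := Real.sqrt_nonneg (r ^ 2 - ‖ξ.1‖ ^ 2)
  rw [hF, hφ]
  set q := Real.sqrt (r ^ 2 - ‖ξ.1‖ ^ 2) with hq
  split_ifs with h
  · have hqe : q = ξ.2 := by
      rw [hq, show r ^ 2 - ‖ξ.1‖ ^ 2 = ξ.2 ^ 2 by linarith, Real.sqrt_sq h2.le]
    have hSe : S ξ = m * r ^ (2 * m - 2) := by
      simp only [hS, h]
      rw [Finset.sum_congr rfl (g := fun _ => r ^ (2 * m - 2)) fun i hi => ?_]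
      · simp
      · rw [← pow_add, ← pow_mul]
        have := Finset.mem_range.1 hi
        congr 1
        omega
    rw [hqe, hSe, one_div]
    ring
  · have hfac : (‖ξ.1‖ ^ 2 + ξ.2 ^ 2) ^ m - r ^ (2 * m) = (ξ.2 - q) * ((ξ.2 + q) * S ξ) := by
      rw [pow_mul, ← (Commute.all _ _).geom_sum₂_mul]
      change S ξ * _ = _
      linear_combination S ξ * hsq
    have hne : ξ.2 - q ≠ 0 := fun h0 => h (by
      rw [sub_eq_zero.1 h0, hsq]
      ring)
    have hpos : (ξ.2 + q) * S ξ ≠ 0 := by positivity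
    rw [hfac]
    field_simp
end
end
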